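/- Every flow graph G has a pair of strongly independent spanning trees rooted at s. -/

import Mathlib

variable {V : Type*}

/-- `IsWalk A u v p`: `p` is a path from `u` to `v` in the digraph with arc
relation `A`, listing all of its vertices in order. -/
def IsWalk (A : V → V → Prop) (u v : V) (p : List V) : Prop :=
  p.Chain' A ∧ p.head? = some u ∧ p.getLast? = some v

/-- A flow graph: a directed graph with arc relation `A` and start vertex `s`
such that every vertex is reachable from `s` and no arc enters `s`. -/
structure FlowGraph (V : Type*) where
  A : V → V → Prop
  s : V
  reach : ∀ v : V, ∃ p : List V, IsWalk A s v p
  no_enter : ∀ v : V, ¬ A v s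

/-- `DomOn A s v w`: `v` lies on every path from `s` to `w` in the digraph with
arc relation `A`. -/
def DomOn (A : V → V → Prop) (s v w : V) : Prop :=
  ∀ p : List V, IsWalk A s w p → v ∈ p

/-- `v` dominates `w` in the flow graph `G`. -/
def FlowGraph.Dom (G : FlowGraph V) (v w : V) : Prop :=
  DomOn G.A G.s v w

/-- A rooted tree on vertex set `V`, given by a parent function: the root is a
fixed point of the parent function, and iterating the parent function from any
vertex eventually reaches the root. -/
structure ParentTree (V : Type*) where
  parent : V → V
  root : V
  parent_root : parent root = root
  reaches_root : ∀ v : V, ∃ n : ℕ, parent^[n] v = root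

/-- `T.Anc x y`: `x` is an ancestor of `y` in the rooted tree `T` (every vertex
is an ancestor of itself). -/
def ParentTree.Anc (T : ParentTree V) (x y : V) : Prop :=
  ∃ n : ℕ, T.parent^[n] y = x

/-- `T` has the parent property with respect to `G`: for every arc `(v, w)`,
the parent of `w` is an ancestor of `v` in `T`. -/
def ParentProperty (G : FlowGraph V) (T : ParentTree V) : Prop :=
  ∀ v w : V, G.A v w → T.Anc (T.parent w) v

/-- The sibling property with respect to an arbitrary arc relation `A` with
start vertex `s`: no non-root vertex dominates a distinct vertex with the same
parent. -/
def SiblingPropertyOn (A : V → V → Prop) (s : V) (T : ParentTree V) : Prop :=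
  ∀ v w : V, v ≠ T.root → w ≠ T.root → v ≠ w → T.parent v = T.parent w →
    ¬ DomOn A s v w

/-- `T` has the sibling property with respect to the flow graph `G`. -/
def SiblingProperty (G : FlowGraph V) (T : ParentTree V) : Prop :=
  SiblingPropertyOn G.A G.s T

/-- `T` is the dominator tree of the digraph with arc relation `A` and start
vertex `s`: `T` is rooted at `s`, and the parent of every vertex `v ≠ s` is its
immediate dominator, i.e. a strict dominator of `v` that is dominated by every
strict dominator of `v`. -/
def IsDomTreeOn (A : V → V → Prop) (s : V) (T : ParentTree V) : Prop :=
  T.root = s ∧ ∀ v : V, v ≠ s →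
    DomOn A s (T.parent v) v ∧ T.parent v ≠ v ∧
    ∀ u : V, DomOn A s u v → u ≠ v → DomOn A s u (T.parent v)

/-- `T` is the dominator tree of the flow graph `G`. -/
def IsDomTree (G : FlowGraph V) (T : ParentTree V) : Prop :=
  IsDomTreeOn G.A G.s T

/-- `ord` is (the numbering of) a preorder of the rooted tree `T`: an injective
numbering of the vertices such that for every vertex `v` the descendants of `v`
are ordered consecutively, with `v` first. -/
def IsTreePreorder (T : ParentTree V) (ord : V → ℕ) : Prop :=
  Function.Injective ord ∧
  (∀ v x : V, T.Anc v x → ord v ≤ ord x) ∧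
  (∀ v x y z : V, T.Anc v x → T.Anc v z → ord x ≤ ord y → ord y ≤ ord z →
    T.Anc v y)

/-- A preorder `ord` of `T` is low-high on the digraph with arc relation `A`
and start vertex `s`: for every `v ≠ s`, either `(t(v), v)` is an arc, or there
are arcs `(u, v)` and `(w, v)` with `u < v < w` in the order and `w` not a
descendant of `v` in `T`. -/
def LowHighOn (A : V → V → Prop) (s : V) (T : ParentTree V) (ord : V → ℕ) :
    Prop :=
  IsTreePreorder T ord ∧
  ∀ v : V, v ≠ s → (A (T.parent v) v ∨
    ∃ u w : V, A u v ∧ A w v ∧ ord u < ord v ∧ ord v < ord w ∧ ¬ T.Anc v w)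

/-- A low-high order of `T` on the flow graph `G`. -/
def LowHigh (G : FlowGraph V) (T : ParentTree V) (ord : V → ℕ) : Prop :=
  LowHighOn G.A G.s T ord

/-- `B` is (the arc relation of) a spanning tree of `G` rooted at `s`: a
subgraph of `G` in which no arc enters `s`, every vertex other than `s` has
exactly one entering arc, and every vertex is reachable from `s`. -/
def IsSpanningTree (G : FlowGraph V) (B : V → V → Prop) : Prop :=
  (∀ u v : V, B u v → G.A u v) ∧
  (∀ v : V, ¬ B v G.s) ∧
  (∀ v : V, v ≠ G.s → ∃! u : V, B u v) ∧
  (∀ v : V, ∃ p : List V, IsWalk B G.s v p)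

/-- Spanning trees `B` and `R` of `G` rooted at `s` are independent: for every
vertex `v`, the paths from `s` to `v` in `B` and in `R` have in common only
dominators of `v`. -/
def Independent (G : FlowGraph V) (B R : V → V → Prop) : Prop :=
  ∀ v : V, ∀ p q : List V, IsWalk B G.s v p → IsWalk R G.s v q →
    ∀ x : V, x ∈ p → x ∈ q → G.Dom x v

/-- Spanning trees `B` and `R` of `G` rooted at `s` are strongly independent:
for every pair of vertices `v`, `w`, either the path from `s` to `v` in `B` and
the path from `s` to `w` in `R` have in common only common dominators of `v`
and `w`, or the same holds with the roles of `B` and `R` exchanged. -/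
def StronglyIndependent (G : FlowGraph V) (B R : V → V → Prop) : Prop :=
  ∀ v w : V,
    (∀ p q : List V, IsWalk B G.s v p → IsWalk R G.s w q →
      ∀ x : V, x ∈ p → x ∈ q → G.Dom x v ∧ G.Dom x w) ∨
    (∀ p q : List V, IsWalk R G.s v p → IsWalk B G.s w q →
      ∀ x : V, x ∈ p → x ∈ q → G.Dom x v ∧ G.Dom x w)

/-- `IsDerivedArcOf G T v b a`: `(a, b)` is the derived arc of the arc `(v, b)`
of `G` with respect to `T`: `b` is not an ancestor of `v` in `T`, and `a = v`
if `v` is the parent of `b`, while otherwise `a` is the sibling of `b` in `T`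
that is an ancestor of `v`. -/
def IsDerivedArcOf (G : FlowGraph V) (T : ParentTree V) (v b a : V) : Prop :=
  G.A v b ∧ ¬ T.Anc b v ∧
    ((v = T.parent b ∧ a = v) ∨
     (v ≠ T.parent b ∧ a ≠ T.root ∧ T.parent a = T.parent b ∧ T.Anc a v))

/-- The arc relation of the derived graph of `G` with respect to `T`. -/
def DerivedArc (G : FlowGraph V) (T : ParentTree V) (a b : V) : Prop :=
  ∃ v : V, IsDerivedArcOf G T v b a

/-- `S` is the vertex set of a strongly connected subgraph of the digraph with
arc relation `A`. -/
def StronglyConnectedSet (A : V → V → Prop) (S : Set V) : Prop :=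
  S.Nonempty ∧ ∀ u ∈ S, ∀ v ∈ S, ∃ p : List V,
    IsWalk A u v p ∧ ∀ x ∈ p, x ∈ S

/-- `G` is reducible: every strongly connected subgraph has a single entry
vertex, i.e. a vertex of the subgraph contained in every path from `s` to a
vertex of the subgraph. -/
def Reducible (G : FlowGraph V) : Prop :=
  ∀ S : Set V, StronglyConnectedSet G.A S →
    ∃ v ∈ S, ∀ u ∈ S, ∀ p : List V, IsWalk G.A G.s u p → v ∈ p

/-- A digraph is acyclic if it has no cycle (a path from a vertex to itself
with at least one arc). -/
def Acyclic (A : V → V → Prop) : Prop :=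
  ¬ ∃ (v : V) (p : List V), IsWalk A v v p ∧ 2 ≤ p.length

/-- `IsHighWalk A ν u v p`: `p` is a high path from `u` to `v`: a path all of
whose vertices other than `u` and `v` are greater (in the numbering `ν`) than
both `u` and `v`. -/
def IsHighWalk (A : V → V → Prop) (ν : V → ℕ) (u v : V) (p : List V) : Prop :=
  IsWalk A u v p ∧ ∀ x ∈ p, x ≠ u → x ≠ v → ν u < ν x ∧ ν v < ν x

/-! Let `T` be the dominator tree of `G`. Call a preorder of `T` low-high if every `v ≠ s` is
entered by an arc from its parent, or by one arc from a smaller vertex and one from a larger vertex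
outside the subtree of `v`. Given such an order, let the blue tree enter every vertex from its
parent or a smaller vertex, and the red tree from its parent or a larger vertex. If `v ≤ w`, a blue
path to `v` visits only vertices `≤ v`, whereas a red path to `w` visits only ancestors of `w` and
vertices `> w`; so a common vertex is an ancestor of `w` lying below `v ≤ w` in the order, hence an
ancestor of `v` as well.

A low-high order of `T` is assembled from orders of the sibling sets, where domination between
distinct vertices is trivial. There one picks an arc `(v, w)` from a child `v` entered by its parent
to a child `w` that is not, such that `w` dominates nothing else once `v` is deleted. Contracting
`w` into `v` preserves the triviality of domination, and an order of the contracted digraph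
is extended by putting `w` next to `v`, on the side of another in-neighbour `u` of `w`. -/

/-! ### Reachability and domination inside a vertex set -/

/-- `ReachableWithin A S X y`: some path from a vertex of `S` to `y` has all its vertices in `X`.
Deleting a vertex amounts to shrinking `X`. -/
inductive ReachableWithin (A : V → V → Prop) (S X : Set V) : V → Prop
  | source {y : V} : y ∈ S → y ∈ X → ReachableWithin A S X y
  | tail {u y : V} : ReachableWithin A S X u → A u y → y ∈ X → ReachableWithin A S X y

/-- `DominatesWithin A S X x y`: in the digraph induced on `X`, every path from `S` to `y`
contains `x`. -/
def DominatesWithin (A : V → V → Prop) (S X : Set V) (x y : V) : Prop :=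
  ¬ ReachableWithin A S (X \ {x}) y

section Reachability

variable {A A' : V → V → Prop} {S X X' : Set V} {s w x y z : V}

namespace ReachableWithin

theorem mem (h : ReachableWithin A S X y) : y ∈ X := by
  cases h <;> assumption

theorem mono (hA : ∀ a b, A a b → A' a b) (hX : X ⊆ X') (h : ReachableWithin A S X y) :
    ReachableWithin A' S X' y := by
  induction h with
  | source hS hy => exact .source hS (hX hy)
  | tail _ huy hy ih => exact .tail ih (hA _ _ huy) (hX hy)

theorem mono_set (hX : X ⊆ X') (h : ReachableWithin A S X y) : ReachableWithin A S X' y :=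
  h.mono (fun _ _ ↦ id) hX

theorem diff_or_exists_first (Y : Set V) (h : ReachableWithin A S X z) :
    ReachableWithin A S (X \ Y) z ∨ ∃ y ∈ Y, ReachableWithin A S (X \ (Y \ {y})) y := by
  induction h with
  | @source z hS hz =>
    by_cases hzY : z ∈ Y
    · exact .inr ⟨z, hzY, .source hS ⟨hz, fun h ↦ h.2 rfl⟩⟩
    · exact .inl (.source hS ⟨hz, hzY⟩)
  | @tail u z _ huz hz ih =>
    refine ih.elim (fun hu ↦ ?_) .inr
    by_cases hzY : z ∈ Y
    · have hu' := hu.mono_set (Set.sdiff_subset_sdiff_right (Set.sdiff_subset (t := {z})))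
      exact .inr ⟨z, hzY, hu'.tail huz ⟨hz, fun h ↦ h.2 rfl⟩⟩
    · exact .inl (hu.tail huz ⟨hz, hzY⟩)

theorem diff_or_eq_or_exists_arc (v : V) (h : ReachableWithin A S X z) :
    ReachableWithin A S (X \ {v}) z ∨ z = v ∨
      ∃ w ∈ X, w ≠ v ∧ A v w ∧ ¬ ReachableWithin A S (X \ {v}) w := by
  induction h with
  | @source z hS hz =>
    by_cases hzv : z = v
    · exact .inr (.inl hzv)
    · exact .inl (.source hS ⟨hz, hzv⟩)
  | @tail u z _ huz hz ih =>
    by_cases hzv : z = v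
    · exact .inr (.inl hzv)
    rcases ih with hu | rfl | hw
    · exact .inl (hu.tail huz ⟨hz, hzv⟩)
    · by_cases hzr : ReachableWithin A S (X \ {u}) z
      · exact .inl hzr
      · exact .inr (.inr ⟨z, hz, hzv, huz, hzr⟩)
    · exact .inr (.inr hw)

theorem exists_exit_arc (h : ReachableWithin A S X y) (hy : y ∉ S) :
    ∃ v ∈ X, v ∈ S ∧ ∃ w ∈ X, w ∉ S ∧ A v w := by
  induction h with
  | source hS _ => exact absurd hS hy
  | @tail u y hu huy hyX ih =>
    by_cases huS : u ∈ S
    · exact ⟨u, hu.mem, huS, y, hyX, hy, huy⟩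
    · exact ih huS

theorem exists_arc_ne (h : ReachableWithin A S X w) (hw : w ∉ S) : ∃ u ∈ X, u ≠ w ∧ A u w := by
  induction h with
  | source hS _ => exact absurd hS hw
  | @tail u w hu huw _ ih =>
    rcases eq_or_ne u w with rfl | hne
    · exact ih hw
    · exact ⟨u, hu.mem, hne, huw⟩

end ReachableWithin

theorem reachableWithin_iff_exists_isWalk :
    ReachableWithin A {s} X z ↔ ∃ p, IsWalk A s z p ∧ ∀ y ∈ p, y ∈ X := by
  constructor
  · intro h
    induction h with
    | @source z hz hzX =>
      exact ⟨[s], ⟨List.isChain_singleton s, rfl, congrArg some hz.symm⟩, by simp_all⟩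
    | @tail u z _ huz hzX ih =>
      obtain ⟨p, ⟨hp, hhead, hlast⟩, hpX⟩ := ih
      refine ⟨p ++ [z], ⟨hp.append (List.isChain_singleton z) ?_, ?_, by simp⟩, ?_⟩
      · simp_all
      · simp [hhead]
      · simpa [or_imp, forall_and, hzX] using hpX
  · rintro ⟨p, ⟨hp, hhead, hlast⟩, hpX⟩
    induction p using List.reverseRecOn generalizing z with
    | nil => simp at hhead
    | append_singleton q x ih =>
      obtain rfl : x = z := by simpa using hlast
      rcases List.eq_nil_or_concat' q with rfl | ⟨q', u, rfl⟩
      · exact .source (by simpa using hhead) (hpX x (by simp))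
      · rw [List.Chain', List.isChain_append] at hp
        have hu : ReachableWithin A {s} X u :=
          ih (fun y hy ↦ hpX y (List.mem_append_left _ hy)) hp.1 (by simpa using hhead) (by simp)
        exact hu.tail (hp.2.2 u (by simp) x rfl) (hpX x (by simp))

namespace DominatesWithin

theorem refl (x : V) : DominatesWithin A S X x x :=
  fun h ↦ h.mem.2 rfl

theorem trans (hxy : DominatesWithin A S X x y) (hyz : DominatesWithin A S X y z) :
    DominatesWithin A S X x z := by
  intro hz
  rcases hz.diff_or_exists_first {y} with h | ⟨_, rfl, hy⟩
  · exact hyz (h.mono_set (Set.sdiff_subset_sdiff_left Set.sdiff_subset))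
  · exact hxy (hy.mono_set Set.sdiff_subset)

theorem antisymm (hx : ReachableWithin A S X x) (hxy : DominatesWithin A S X x y)
    (hyx : DominatesWithin A S X y x) : x = y := by
  by_contra hne
  rcases hx.diff_or_exists_first {x, y} with h | ⟨z, rfl | rfl, hz⟩
  · exact h.mem.2 (.inl rfl)
  · exact hyx (hz.mono_set (Set.sdiff_subset_sdiff_right (by simp [Ne.symm hne])))
  · exact hxy (hz.mono_set (Set.sdiff_subset_sdiff_right (by simp [hne])))

theorem total (hz : ReachableWithin A S X z) (hxz : DominatesWithin A S X x z)
    (hyz : DominatesWithin A S X y z) :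
    DominatesWithin A S X x y ∨ DominatesWithin A S X y x := by
  by_contra! ⟨hxy, hyx⟩
  rw [DominatesWithin, not_not] at hxy hyx
  suffices ReachableWithin A S (X \ {x}) z ∨ ReachableWithin A S (X \ {y}) z from
    this.elim hxz hyz
  clear hxz hyz
  induction hz with
  | @source z hS hz =>
    rcases eq_or_ne z x with rfl | hzx
    · exact .inr hyx
    · exact .inl (.source hS ⟨hz, hzx⟩)
  | @tail u z _ huz hz ih =>
    rcases eq_or_ne z x with rfl | hzx
    · exact .inr hyx
    rcases eq_or_ne z y with rfl | hzy
    · exact .inl hxy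
    exact ih.imp (·.tail huz ⟨hz, hzx⟩) (·.tail huz ⟨hz, hzy⟩)

end DominatesWithin

end Reachability

/-! ### Low-high orders of flat digraphs -/

/-- The digraph induced on `X`, with sources `S`, is flat: a vertex is dominated only by itself.
It stands for a flow graph with trivial dominators whose start vertex, not in `X`, has arcs to
`S`. -/
def IsFlat (A : V → V → Prop) (S X : Set V) : Prop :=
  (∀ y ∈ X, ReachableWithin A S X y) ∧
    ∀ x ∈ X, ∀ y ∈ X, y ≠ x → ReachableWithin A S (X \ {x}) y

/-- The numbering `f` is a low-high order of the flat digraph induced on `X` with sources `S`: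
every vertex of `X` is a source or has both a smaller and a larger in-neighbour. -/
def IsFlatLowHigh (A : V → V → Prop) (S X : Set V) (f : V → ℕ) : Prop :=
  Set.InjOn f X ∧
    ∀ x ∈ X, x ∈ S ∨ ∃ u ∈ X, ∃ w ∈ X, A u x ∧ A w x ∧ f u < f x ∧ f x < f w

/-- The arcs after contracting `w` into `v`: `v` inherits the arcs leaving `w`. The arcs entering
`w` are not moved, as `v` will be a source. The vertex `w` is to be removed from the vertex set. -/
def contractArc (A : V → V → Prop) (v w : V) (a b : V) : Prop :=
  A a b ∨ (a = v ∧ A w b)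

section Flat

variable {A : V → V → Prop} {S X : Set V} {u v w y : V} {f : V → ℕ}

theorem ReachableWithin.contractArc (hvS : v ∈ S) (hvX : v ∈ X) (hvw : v ≠ w)
    (h : ReachableWithin A S X y) (hyw : y ≠ w) :
    ReachableWithin (contractArc A v w) S (X \ {w}) y := by
  induction h with
  | source hS hy => exact .source hS ⟨hy, hyw⟩
  | @tail u y _ huy hy ih =>
    rcases eq_or_ne u w with rfl | huw
    · exact .tail (.source hvS ⟨hvX, hvw⟩) (.inr ⟨rfl, huy⟩) ⟨hy, hyw⟩
    · exact .tail (ih huw) (.inl huy) ⟨hy, hyw⟩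

theorem IsFlat.exists_contractible (h : IsFlat A S X) (hX : X.Finite) (hv : v ∈ X)
    (hout : ∃ w ∈ X, w ∉ S ∧ A v w) :
    ∃ w ∈ X, w ∉ S ∧ A v w ∧
      ∀ y ∈ X, y ≠ v → y ≠ w → ReachableWithin A S ((X \ {v}) \ {w}) y := by
  obtain ⟨w, ⟨hwX, hwS, hvw⟩, hmax⟩ := Set.Finite.exists_maximalFor
    (fun w ↦ {x | DominatesWithin A S (X \ {v}) x w}) {w ∈ X | w ∉ S ∧ A v w} (hX.sep _) hout
  refine ⟨w, hwX, hwS, hvw, fun y hyX hyv hyw ↦ ?_⟩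
  by_contra hy
  -- A path to `y` avoiding `w` leaves `v` through some `w'` that `w` dominates, whence `w'`
  -- dominates more than `w`.
  obtain ⟨w', ⟨hw'X, hw'w⟩, hw'v, hvw', hww'⟩ :
      ∃ w' ∈ X \ {w}, w' ≠ v ∧ A v w' ∧ DominatesWithin A S (X \ {v}) w w' := by
    unfold DominatesWithin
    rw [Set.sdiff_sdiff_comm (s := X) (t := {v}) (u := {w})] at hy ⊢
    exact (((h.2 w hwX y hyX hyw).diff_or_eq_or_exists_arc v).resolve_left hy).resolve_left hyv
  have hw'S : w' ∉ S := fun hS ↦ hww' (.source hS ⟨⟨hw'X, hw'v⟩, hw'w⟩)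
  have hw'w_dom : DominatesWithin A S (X \ {v}) w' w :=
    hmax ⟨hw'X, hw'S, hvw'⟩ (fun _ hx ↦ hx.trans hww') (DominatesWithin.refl w')
  exact hw'w (DominatesWithin.antisymm (h.2 v hv w' hw'X hw'v) hw'w_dom hww')

theorem IsFlat.contractArc (h : IsFlat A S X) (hvS : v ∈ S) (hvX : v ∈ X) (hvw : v ≠ w)
    (hw : ∀ y ∈ X, y ≠ v → y ≠ w → ReachableWithin A S ((X \ {v}) \ {w}) y) :
    IsFlat (contractArc A v w) S (X \ {w}) := by
  refine ⟨fun y hy ↦ (h.1 y hy.1).contractArc hvS hvX hvw hy.2, fun x hx y hy hyx ↦ ?_⟩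
  rw [Set.sdiff_sdiff_comm]
  rcases eq_or_ne v x with rfl | hvx
  · exact (hw y hy.1 hyx hy.2).mono (fun _ _ ↦ .inl) subset_rfl
  · exact (h.2 x hx.1 y hy.1 hyx).contractArc hvS ⟨hvX, hvx⟩ hvw hy.2

theorem exists_reorder_between (hf : Set.InjOn f (X \ {w})) (hu : u ∈ X \ {w})
    (hv : v ∈ X \ {w}) (huv : u ≠ v) :
    ∃ g : V → ℕ, Set.InjOn g X ∧
      (∀ a b, a ≠ w → b ≠ w → f a < f b → g a < g b) ∧
      (∀ b, b ≠ w → f v < f b → g w < g b) ∧ (∀ b, b ≠ w → f b < f v → g b < g w) ∧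
      (g u < g w ∧ g w < g v ∨ g v < g w ∧ g w < g u) := by
  classical
  have hfuv : f u ≠ f v := fun h ↦ huv (hf hu hv h)
  have huw : u ≠ w := hu.2
  have hvw : v ≠ w := hv.2
  let k := if f v < f u then 2 * f v + 2 else 2 * f v
  have hk : f v < f u ∧ k = 2 * f v + 2 ∨ f u < f v ∧ k = 2 * f v := by grind
  refine ⟨fun x ↦ if x = w then k else 2 * f x + 1, fun x hx y hy hxy ↦ ?_, ?_, ?_, ?_, ?_⟩
  · by_cases hxw : x = w <;> by_cases hyw : y = w <;> simp only [hxw, hyw, ↓reduceIte] at hxy ⊢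
    · omega
    · omega
    · exact hf ⟨hx, hxw⟩ ⟨hy, hyw⟩ (by omega)
  · intro a b ha hb hab
    simp only [ha, hb, ↓reduceIte]
    omega
  · intro b hb hvb
    simp only [hb, ↓reduceIte]
    omega
  · intro b hb hbv
    simp only [hb, ↓reduceIte]
    omega
  · simp only [huw, hvw, ↓reduceIte]
    omega

theorem IsFlatLowHigh.exists_of_contractArc (h : IsFlatLowHigh (contractArc A v w) S (X \ {w}) f)
    (hv : v ∈ X) (hw : w ∈ X) (hu : u ∈ X) (huv : u ≠ v) (hvw : v ≠ w) (huw : u ≠ w)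
    (hAvw : A v w) (hAuw : A u w) : ∃ g, IsFlatLowHigh A S X g := by
  obtain ⟨hinj, hlh⟩ := h
  obtain ⟨g, ginj, gmono, gabove, gbelow, gw⟩ :=
    exists_reorder_between hinj ⟨hu, huw⟩ ⟨hv, hvw⟩ huv
  refine ⟨g, ginj, fun x hx ↦ ?_⟩
  rcases eq_or_ne x w with rfl | hxw
  · right
    rcases gw with ⟨hlow, hhigh⟩ | ⟨hlow, hhigh⟩
    · exact ⟨u, hu, v, hv, hAuw, hAvw, hlow, hhigh⟩
    · exact ⟨v, hv, u, hu, hAvw, hAuw, hlow, hhigh⟩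
  · refine (hlh x ⟨hx, hxw⟩).imp id ?_
    rintro ⟨a, ⟨haX, haw⟩, b, ⟨hbX, hbw⟩, ha, hb, hax, hxb⟩
    have hlow : ∃ a' ∈ X, A a' x ∧ g a' < g x := by
      rcases ha with ha | ⟨rfl, ha⟩
      · exact ⟨a, haX, ha, gmono a x haw hxw hax⟩
      · exact ⟨w, hw, ha, gabove x hxw hax⟩
    have hhigh : ∃ b' ∈ X, A b' x ∧ g x < g b' := by
      rcases hb with hb | ⟨rfl, hb⟩
      · exact ⟨b, hbX, hb, gmono x b hxw hbw hxb⟩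
      · exact ⟨w, hw, hb, gbelow x hxw hxb⟩
    obtain ⟨a', ha'X, ha', hlt⟩ := hlow
    obtain ⟨b', hb'X, hb', hgt⟩ := hhigh
    exact ⟨a', ha'X, b', hb'X, ha', hb', hlt, hgt⟩

theorem IsFlat.exists_isFlatLowHigh {A : V → V → Prop} {S X : Set V} (h : IsFlat A S X)
    (hX : X.Finite) : ∃ f, IsFlatLowHigh A S X f := by
  by_cases hXS : X ⊆ S
  · obtain ⟨f, hf⟩ := Set.countable_iff_exists_injOn.1 hX.countable
    exact ⟨f, hf, fun x hx ↦ .inl (hXS hx)⟩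
  obtain ⟨y, hyX, hyS⟩ := Set.not_subset.1 hXS
  obtain ⟨v, hvX, hvS, hout⟩ := (h.1 y hyX).exists_exit_arc hyS
  obtain ⟨w, hwX, hwS, hAvw, hw⟩ := h.exists_contractible hX hvX hout
  have hvw : v ≠ w := fun e ↦ hwS (e ▸ hvS)
  obtain ⟨u, ⟨huX, huv⟩, huw, hAuw⟩ := (h.2 v hvX w hwX hvw.symm).exists_arc_ne hwS
  obtain ⟨f, hf⟩ := (h.contractArc hvS hvX hvw hw).exists_isFlatLowHigh hX.sdiff
  exact hf.exists_of_contractArc hvX hwX huX huv hvw huw hAvw hAuw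
termination_by X.ncard
decreasing_by exact Set.ncard_sdiff_singleton_lt_of_mem hwX hX

end Flat

/-! ### Rooted trees and their preorders -/

namespace ParentTree

variable {T : ParentTree V} {a b d u v x y z : V} {f ord : V → ℕ}

@[elab_as_elim]
theorem parent_induction (T : ParentTree V) {motive : V → Prop} (root : motive T.root)
    (step : ∀ v, v ≠ T.root → motive (T.parent v) → motive v) (v : V) : motive v := by
  obtain ⟨n, hn⟩ := T.reaches_root v
  induction n generalizing v with
  | zero => exact (show v = T.root from hn) ▸ root
  | succ n ih =>
    by_cases hv : v = T.root
    · exact hv ▸ root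
    · exact step v hv (ih _ hn)

namespace Anc

theorem refl (x : V) : T.Anc x x := ⟨0, rfl⟩

theorem of_parent (h : T.Anc x (T.parent y)) : T.Anc x y :=
  h.imp' Nat.succ fun _ ↦ id

theorem trans (hxy : T.Anc x y) (hyz : T.Anc y z) : T.Anc x z := by
  obtain ⟨n, rfl⟩ := hxy
  obtain ⟨m, rfl⟩ := hyz
  exact ⟨n + m, Function.iterate_add_apply _ n m z⟩

theorem parent_right (h : T.Anc x y) (hne : x ≠ y) : T.Anc x (T.parent y) := by
  obtain ⟨_ | n, hn⟩ := h
  · exact absurd hn.symm hne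
  · exact ⟨n, hn⟩

theorem eq_root (h : T.Anc x T.root) : x = T.root := by
  obtain ⟨n, rfl⟩ := h
  exact Function.iterate_fixed T.parent_root n

theorem total (hx : T.Anc x z) (hy : T.Anc y z) : T.Anc x y ∨ T.Anc y x := by
  obtain ⟨n, rfl⟩ := hx
  obtain ⟨m, rfl⟩ := hy
  have key (i j : ℕ) (h : i ≤ j) : T.Anc (T.parent^[j] z) (T.parent^[i] z) :=
    ⟨j - i, by rw [← Function.iterate_add_apply, Nat.sub_add_cancel h]⟩
  exact (le_total m n).imp (key m n) (key n m)

end Anc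

theorem not_anc_parent (hv : v ≠ T.root) : ¬ T.Anc v (T.parent v) := by
  rintro ⟨n, hn⟩
  refine hv ?_
  induction v using T.parent_induction with
  | root => rfl
  | step v _ ih =>
    have hroot : T.parent v = T.root := by
      by_contra hne
      exact hne (ih hne (by
        rw [← Function.iterate_succ_apply, Function.iterate_succ_apply', hn]))
    rw [← hn, hroot, Function.iterate_fixed T.parent_root]

/-- The children of `d`. The root, a fixed point of `parent`, is not a child of itself. -/
def children (T : ParentTree V) (d : V) : Set V :=
  {c | c ≠ T.root ∧ T.parent c = d}

theorem Anc.exists_mem_children (h : T.Anc d u) (hne : d ≠ u) :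
    ∃ c ∈ T.children d, T.Anc c u := by
  induction u using T.parent_induction with
  | root => exact absurd h.eq_root hne
  | step u hu ih =>
    rcases eq_or_ne d (T.parent u) with hd | hd
    · exact ⟨u, ⟨hu, hd.symm⟩, .refl u⟩
    · obtain ⟨c, hc, hcu⟩ := ih (h.parent_right hne) hd
      exact ⟨c, hc, hcu.of_parent⟩

theorem not_anc_of_mem_children (ha : a ∈ T.children d) (hb : b ∈ T.children d) (hab : a ≠ b) :
    ¬ T.Anc a b := fun h ↦
  not_anc_parent ha.1 (ha.2.trans hb.2.symm ▸ h.parent_right hab)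

theorem eq_of_mem_children_of_anc (ha : a ∈ T.children d) (hb : b ∈ T.children d)
    (hau : T.Anc a u) (hbu : T.Anc b u) : a = b := by
  by_contra hab
  exact (hau.total hbu).elim (not_anc_of_mem_children ha hb hab)
    (not_anc_of_mem_children hb ha (Ne.symm hab))

theorem anc_or_anc_or_exists_siblings (T : ParentTree V) (x y : V) :
    T.Anc x y ∨ T.Anc y x ∨
      ∃ d, ∃ a ∈ T.children d, ∃ b ∈ T.children d, a ≠ b ∧ T.Anc a x ∧ T.Anc b y := by
  induction x using T.parent_induction with
  | root => exact .inl (T.reaches_root y)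
  | step x hx ih =>
    rcases ih with h | h | ⟨d, a, ha, b, hb, hab, hax, hby⟩
    · rcases eq_or_ne (T.parent x) y with rfl | hne
      · exact .inr (.inl ⟨1, rfl⟩)
      obtain ⟨c, hc, hcy⟩ := h.exists_mem_children hne
      rcases eq_or_ne x c with rfl | hxc
      · exact .inl hcy
      · exact .inr (.inr ⟨_, x, ⟨hx, rfl⟩, c, hc, hxc, .refl x, hcy⟩)
    · exact .inr (.inl h.of_parent)
    · exact .inr (.inr ⟨d, a, ha, b, hb, hab, hax.of_parent, hby⟩)

open Classical in
/-- The number of arcs on the tree path from the root to `v`. -/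
noncomputable def depth (T : ParentTree V) (v : V) : ℕ :=
  Nat.find (T.reaches_root v)

theorem depth_eq_succ (hv : v ≠ T.root) : T.depth v = T.depth (T.parent v) + 1 := by
  classical exact Nat.find_comp_succ (T.reaches_root v) (T.reaches_root (T.parent v)) hv

/-- The sequence of numbers `f c` for the vertices `c` on the tree path from the root, excluded,
to `v`. When `f` numbers siblings injectively, the lexicographic order of these keys is the preorder
visiting siblings in the order of `f`. -/
noncomputable def preorderKey (T : ParentTree V) (f : V → ℕ) (v : V) : List ℕ :=
  ((List.iterate T.parent v (T.depth v)).map f).reverse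

theorem preorderKey_eq_append (f : V → ℕ) (hv : v ≠ T.root) :
    T.preorderKey f v = T.preorderKey f (T.parent v) ++ [f v] := by
  simp [preorderKey, depth_eq_succ hv]

theorem Anc.preorderKey_prefix (f : V → ℕ) (h : T.Anc x y) :
    T.preorderKey f x <+: T.preorderKey f y := by
  induction y using T.parent_induction with
  | root => rw [h.eq_root]
  | step y hy ih =>
    rcases eq_or_ne x y with rfl | hne
    · rfl
    · rw [preorderKey_eq_append f hy]
      exact (ih (h.parent_right hne)).trans (List.prefix_append _ _)

theorem Anc.preorderKey_le (f : V → ℕ) (h : T.Anc x y) :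
    T.preorderKey f x ≤ T.preorderKey f y :=
  not_lt.1 (List.IsPrefix.le (h.preorderKey_prefix f))

theorem Anc.preorderKey_lt (f : V → ℕ) (h : T.Anc x y) (hne : x ≠ y) :
    T.preorderKey f x < T.preorderKey f y := by
  have hy : y ≠ T.root := by
    rintro rfl
    exact hne h.eq_root
  calc T.preorderKey f x ≤ T.preorderKey f (T.parent y) :=
        (h.parent_right hne).preorderKey_le f
    _ < T.preorderKey f (T.parent y) ++ [f y] := by
        simpa using List.append_left_lt (l₁ := T.preorderKey f (T.parent y))
          (List.nil_lt_cons (f y) [])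
    _ = T.preorderKey f y := (preorderKey_eq_append f hy).symm

theorem preorderKey_lt_of_siblings (ha : a ∈ T.children d) (hb : b ∈ T.children d)
    (hab : f a < f b) (hax : T.Anc a x) (hby : T.Anc b y) :
    T.preorderKey f x < T.preorderKey f y := by
  obtain ⟨l, hl⟩ := hax.preorderKey_prefix f
  obtain ⟨m, hm⟩ := hby.preorderKey_prefix f
  rw [← hl, ← hm, preorderKey_eq_append f ha.1, preorderKey_eq_append f hb.1, ha.2, hb.2,
    List.append_assoc, List.append_assoc]
  exact List.append_left_lt (List.cons_lt_cons_iff.2 (.inl hab))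

theorem preorderKey_injective (hf : ∀ d, Set.InjOn f (T.children d)) :
    Function.Injective (T.preorderKey f) := by
  intro x y hxy
  by_contra hne
  rcases T.anc_or_anc_or_exists_siblings x y with h | h | ⟨d, a, ha, b, hb, hab, hax, hby⟩
  · exact (h.preorderKey_lt f hne).ne hxy
  · exact (h.preorderKey_lt f (Ne.symm hne)).ne hxy.symm
  · rcases lt_or_gt_of_ne (fun h ↦ hab (hf d ha hb h)) with hlt | hlt
    · exact (preorderKey_lt_of_siblings ha hb hlt hax hby).ne hxy
    · exact (preorderKey_lt_of_siblings hb ha hlt hby hax).ne hxy.symm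

theorem isTreePreorder_of_lt_iff (hf : ∀ d, Set.InjOn f (T.children d))
    (hord : ∀ x y, ord x < ord y ↔ T.preorderKey f x < T.preorderKey f y) :
    IsTreePreorder T ord := by
  have hle (x y : V) : ord x ≤ ord y ↔ T.preorderKey f x ≤ T.preorderKey f y := by
    rw [← not_lt, ← not_lt, hord]
  refine ⟨fun x y h ↦ ?_, fun v x h ↦ (hle v x).2 (h.preorderKey_le f), ?_⟩
  · exact preorderKey_injective hf (((hle x y).1 h.le).antisymm ((hle y x).1 h.ge))
  · intro v x y z hvx hvz hxy hyz
    rw [hle] at hxy hyz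
    rcases T.anc_or_anc_or_exists_siblings v y with h | h | ⟨d, a, ha, b, hb, hab, hav, hby⟩
    · exact h
    · rwa [← preorderKey_injective hf (hxy.antisymm ((h.trans hvx).preorderKey_le f))]
    · rcases lt_or_gt_of_ne (fun h ↦ hab (hf d ha hb h)) with hlt | hlt
      · exact absurd hyz (preorderKey_lt_of_siblings ha hb hlt (hav.trans hvz) hby).not_ge
      · exact absurd hxy (preorderKey_lt_of_siblings hb ha hlt hby (hav.trans hvx)).not_ge

theorem exists_isTreePreorder [Finite V] (hf : ∀ d, Set.InjOn f (T.children d)) :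
    ∃ ord, IsTreePreorder T ord ∧ ∀ d, ∀ a ∈ T.children d, ∀ b ∈ T.children d, f a < f b →
      ∀ x y, T.Anc a x → T.Anc b y → ord x < ord y := by
  obtain ⟨e⟩ := nonempty_orderEmbedding_of_finite_infinite (Set.range (T.preorderKey f)) ℕ
  have hord (x y : V) : e ⟨_, x, rfl⟩ < e ⟨_, y, rfl⟩ ↔
      T.preorderKey f x < T.preorderKey f y := e.lt_iff_lt
  exact ⟨fun v ↦ e ⟨_, v, rfl⟩, isTreePreorder_of_lt_iff hf hord,
    fun d a ha b hb hab x y hax hby ↦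
      (hord x y).2 (preorderKey_lt_of_siblings ha hb hab hax hby)⟩

end ParentTree

/-! ### The dominator tree -/

namespace FlowGraph

variable {G : FlowGraph V} {u v x y z : V}

theorem dom_iff_dominatesWithin :
    G.Dom x y ↔ DominatesWithin G.A {G.s} Set.univ x y := by
  rw [DominatesWithin, reachableWithin_iff_exists_isWalk, Dom, DomOn]
  push Not
  refine forall₂_congr fun p _ ↦ ⟨fun h ↦ ⟨x, h, fun hx ↦ hx.2 rfl⟩, ?_⟩
  rintro ⟨y, hy, hyx⟩
  simp_all

theorem reachableWithin_univ (G : FlowGraph V) (v : V) :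
    ReachableWithin G.A {G.s} Set.univ v := by
  obtain ⟨p, hp⟩ := G.reach v
  exact reachableWithin_iff_exists_isWalk.2 ⟨p, hp, fun _ _ ↦ trivial⟩

namespace Dom

theorem refl (x : V) : G.Dom x x :=
  dom_iff_dominatesWithin.2 (.refl x)

theorem trans (hxy : G.Dom x y) (hyz : G.Dom y z) : G.Dom x z := by
  rw [dom_iff_dominatesWithin] at *
  exact hxy.trans hyz

theorem antisymm (hxy : G.Dom x y) (hyx : G.Dom y x) : x = y := by
  rw [dom_iff_dominatesWithin] at *
  exact DominatesWithin.antisymm (G.reachableWithin_univ x) hxy hyx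

theorem total (hx : G.Dom x z) (hy : G.Dom y z) : G.Dom x y ∨ G.Dom y x := by
  simp only [dom_iff_dominatesWithin] at *
  exact DominatesWithin.total (G.reachableWithin_univ z) hx hy

theorem of_arc (h : G.Dom x v) (huv : G.A u v) (hne : x ≠ v) : G.Dom x u := by
  rw [dom_iff_dominatesWithin] at *
  exact fun hu ↦ h (hu.tail huv ⟨trivial, hne.symm⟩)

theorem start (G : FlowGraph V) (v : V) : G.Dom G.s v :=
  fun _ hp ↦ List.mem_of_mem_head? hp.2.1

theorem eq_start (h : G.Dom x G.s) : x = G.s :=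
  h.antisymm (start G x)

end Dom

theorem finite_setOf_dom (G : FlowGraph V) (v : V) : {x | G.Dom x v}.Finite := by
  obtain ⟨p, hp⟩ := G.reach v
  exact (List.finite_toSet p).subset fun x hx ↦ hx p hp

theorem exists_immediate_dominator (hv : v ≠ G.s) :
    ∃ t, G.Dom t v ∧ t ≠ v ∧ ∀ u, G.Dom u v → u ≠ v → G.Dom u t := by
  obtain ⟨t, ⟨htv, hne⟩, hmax⟩ := Set.Finite.exists_maximalFor (fun t ↦ {x | G.Dom x t})
    {x | G.Dom x v ∧ x ≠ v} ((G.finite_setOf_dom v).subset fun _ h ↦ h.1)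
    ⟨G.s, Dom.start G v, hv.symm⟩
  refine ⟨t, htv, hne, fun u huv hu ↦ (huv.total htv).elim id fun htu ↦ ?_⟩
  exact hmax ⟨huv, hu⟩ (fun _ hx ↦ hx.trans htu) (.refl u)

theorem exists_isDomTree (G : FlowGraph V) : ∃ T, IsDomTree G T := by
  have hex (v : V) : ∃ t, (v = G.s → t = G.s) ∧
      (v ≠ G.s → G.Dom t v ∧ t ≠ v ∧ ∀ u, G.Dom u v → u ≠ v → G.Dom u t) := by
    by_cases hv : v = G.s
    · exact ⟨G.s, fun _ ↦ rfl, fun h ↦ absurd hv h⟩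
    · exact (exists_immediate_dominator hv).imp fun t ht ↦ ⟨fun h ↦ absurd h hv, fun _ ↦ ht⟩
  choose t ht_start ht using hex
  have hlt (v : V) (hv : v ≠ G.s) : {x | G.Dom x (t v)}.ncard < {x | G.Dom x v}.ncard := by
    obtain ⟨htv, hne, -⟩ := ht v hv
    exact Set.ncard_lt_ncard ⟨fun x hx ↦ hx.trans htv, fun h ↦ hne (htv.antisymm (h (.refl v)))⟩
      (G.finite_setOf_dom v)
  have hreach (v : V) : ∃ n, t^[n] v = G.s := by
    induction v using (measure fun v ↦ {x | G.Dom x v}.ncard).wf.induction with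
    | _ v ih =>
      by_cases hv : v = G.s
      · exact ⟨0, hv⟩
      · obtain ⟨n, hn⟩ := ih (t v) (hlt v hv)
        exact ⟨n + 1, hn⟩
  exact ⟨⟨t, G.s, ht_start _ rfl, hreach⟩, rfl, ht⟩

end FlowGraph

section ParentAndSibling

variable {G : FlowGraph V} {T : ParentTree V} {a b c d u v x y z : V} {P : Set V}

theorem IsDomTree.parentProperty (h : IsDomTree G T) : ParentProperty G T := by
  obtain ⟨hroot, ht⟩ := h
  have hanc (x v : V) (hxv : G.Dom x v) : T.Anc x v := by
    induction v using T.parent_induction with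
    | root =>
      rw [hroot] at hxv ⊢
      rw [hxv.eq_start]
      exact .refl G.s
    | step v hv ih =>
      rw [hroot] at hv
      rcases eq_or_ne x v with rfl | hne
      · exact .refl x
      · exact (ih ((ht v hv).2.2 x hxv hne)).of_parent
  intro v w hvw
  have hw : w ≠ G.s := fun e ↦ G.no_enter v (e ▸ hvw)
  exact hanc _ _ (FlowGraph.Dom.of_arc (ht w hw).1 hvw (ht w hw).2.1)

theorem IsDomTree.siblingProperty (h : IsDomTree G T) : SiblingProperty G T := by
  obtain ⟨hroot, ht⟩ := h
  intro v w hv hw hne hvw hdom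
  rw [hroot] at hv hw
  have hdom' : G.Dom v (T.parent v) := hvw ▸ (ht w hw).2.2 v hdom hne
  exact (ht v hv).2.1 (FlowGraph.Dom.antisymm (ht v hv).1 hdom')

theorem ParentProperty.anc_of_arc (h : ParentProperty G T) (hxz : T.Anc x z)
    (hne : x ≠ z) (huz : G.A u z) : T.Anc x u :=
  (hxz.parent_right hne).trans (h u z huz)

theorem ParentProperty.dom_of_anc (h : ParentProperty G T) (hroot : T.root = G.s)
    (hxy : T.Anc x y) : G.Dom x y := by
  rw [FlowGraph.dom_iff_dominatesWithin]
  intro hy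
  induction hy with
  | source hs hx =>
    rw [Set.mem_singleton_iff.1 hs, ← hroot] at hxy hx
    exact hx.2 hxy.eq_root.symm
  | tail _ huz hz ih => exact ih (h.anc_of_arc hxy (Ne.symm hz.2) huz)

/-! ### Existence of low-high orders -/

theorem derivedArc_of_mem_children (ha : a ∈ T.children d) (hb : b ∈ T.children d)
    (hab : a ≠ b) (hav : T.Anc a v) (hvb : G.A v b) : DerivedArc G T a b := by
  have hparent : T.parent a = T.parent b := ha.2.trans hb.2.symm
  refine ⟨v, hvb, fun hbv ↦ hab (ParentTree.eq_of_mem_children_of_anc ha hb hav hbv),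
    .inr ⟨?_, ha.1, hparent, hav⟩⟩
  rintro rfl
  exact ParentTree.not_anc_parent ha.1 (hparent ▸ hav)

theorem DerivedArc.exists_arc (h : DerivedArc G T a b) : ∃ v, T.Anc a v ∧ G.A v b := by
  obtain ⟨v, hvb, -, ⟨-, rfl⟩ | ⟨-, -, -, hav⟩⟩ := h
  · exact ⟨a, .refl a, hvb⟩
  · exact ⟨v, hav, hvb⟩

theorem ParentProperty.reachableWithin_derivedArc (h : ParentProperty G T) (hroot : T.root = G.s)
    (hz : ReachableWithin G.A {G.s} P z) (hc : c ∈ T.children d) (hcz : T.Anc c z) :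
    ReachableWithin (DerivedArc G T) {b | G.A d b} (T.children d ∩ P) c := by
  induction hz generalizing c with
  | source hs _ =>
    rw [Set.mem_singleton_iff.1 hs, ← hroot] at hcz
    exact absurd hcz.eq_root hc.1
  | @tail u z _ huz hzP ih =>
    rcases eq_or_ne c z with rfl | hne
    · have hdu : T.Anc d u := hc.2 ▸ h u c huz
      rcases eq_or_ne d u with rfl | hdu'
      · exact .source huz ⟨hc, hzP⟩
      obtain ⟨a, ha, hau⟩ := hdu.exists_mem_children hdu'
      rcases eq_or_ne a c with rfl | hac
      · exact ih ha hau
      · exact (ih ha hau).tail (derivedArc_of_mem_children ha hc hac hau huz) ⟨hc, hzP⟩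
    · exact ih hc (h.anc_of_arc hcz hne huz)

theorem isFlat_derivedArc_children (hp : ParentProperty G T) (hs : SiblingProperty G T)
    (hroot : T.root = G.s) (d : V) :
    IsFlat (DerivedArc G T) {b | G.A d b} (T.children d) := by
  refine ⟨fun y hy ↦ ?_, fun x hx y hy hyx ↦ ?_⟩
  · exact (hp.reachableWithin_derivedArc hroot (G.reachableWithin_univ y) hy (.refl y)).mono_set
      Set.inter_subset_left
  · have hdom : ¬ G.Dom x y := hs x y hx.1 hy.1 hyx.symm (hx.2.trans hy.2.symm)
    rw [FlowGraph.dom_iff_dominatesWithin, DominatesWithin, not_not] at hdom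
    exact (hp.reachableWithin_derivedArc hroot hdom hy (.refl y)).mono_set
      fun _ hz ↦ ⟨hz.1, hz.2.2⟩

theorem exists_lowHigh [Finite V] (hp : ParentProperty G T) (hs : SiblingProperty G T)
    (hroot : T.root = G.s) : ∃ ord, LowHigh G T ord := by
  choose f hinj hf using fun d ↦
    (isFlat_derivedArc_children hp hs hroot d).exists_isFlatLowHigh (Set.toFinite _)
  have hsib (d : V) : Set.EqOn (fun v ↦ f (T.parent v) v) (f d) (T.children d) :=
    fun v hv ↦ congrArg (f · v) hv.2
  obtain ⟨ord, hpre, hlt⟩ :=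
    T.exists_isTreePreorder fun d ↦ (Set.EqOn.injOn_iff (hsib d)).2 (hinj d)
  refine ⟨ord, hpre, fun v hv ↦ ?_⟩
  have hvc : v ∈ T.children (T.parent v) := ⟨hroot ▸ hv, rfl⟩
  refine (hf _ v hvc).imp id ?_
  rintro ⟨a, ha, b, hb, hav, hbv, hfa, hfb⟩
  rw [← hsib _ ha, ← hsib _ hvc] at hfa
  rw [← hsib _ hb, ← hsib _ hvc] at hfb
  obtain ⟨u, hau, huv⟩ := hav.exists_arc
  obtain ⟨w, hbw, hwv⟩ := hbv.exists_arc
  exact ⟨u, w, huv, hwv, hlt _ a ha v hvc hfa u v hau (.refl v),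
    hlt _ v hvc b hb hfb v w (.refl v) hbw,
    fun hvw ↦ (hlt _ v hvc b hb hfb w w hvw hbw).false⟩

end ParentAndSibling

/-! ### From a low-high order to strongly independent spanning trees -/

/-- The arc relation of the tree in which every vertex `v ≠ s` is entered from `b v`. -/
def parentArc (s : V) (b : V → V) (u v : V) : Prop :=
  v ≠ s ∧ u = b v

/-- `x` strictly precedes `y` in the preorder of `T` obtained from `ord` by reversing the order of
siblings. Ancestors still come first. -/
def ReversePrecedes (T : ParentTree V) (ord : V → ℕ) (x y : V) : Prop :=
  (T.Anc x y ∧ x ≠ y) ∨ (ord y < ord x ∧ ¬ T.Anc y x)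

section SpanningTrees

variable {G : FlowGraph V} {T : ParentTree V} {ord : V → ℕ} {b r : V → V} {L : V → V → Prop}
  {s v w x y z : V} {p q : List V}

theorem isSpanningTree_parentArc (hL : WellFounded L)
    (hb : ∀ v, v ≠ G.s → G.A (b v) v ∧ L (b v) v) : IsSpanningTree G (parentArc G.s b) := by
  refine ⟨?_, fun v h ↦ h.1 rfl, fun v hv ↦ ⟨b v, ⟨hv, rfl⟩, fun _ h ↦ h.2⟩, fun v ↦ ?_⟩
  · rintro _ v ⟨hv, rfl⟩
    exact (hb v hv).1
  · suffices ReachableWithin (parentArc G.s b) {G.s} Set.univ v from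
      (reachableWithin_iff_exists_isWalk.1 this).imp fun _ ↦ And.left
    induction v using hL.induction with
    | _ v ih =>
      by_cases hv : v = G.s
      · exact .source hv trivial
      · exact .tail (ih (b v) (hb v hv).2) ⟨hv, rfl⟩ trivial

theorem IsWalk.eq_or_rel_of_mem [IsTrans V L] (hL : ∀ v, v ≠ s → L (b v) v)
    (hp : IsWalk (parentArc s b) s v p) (hx : x ∈ p) : x = v ∨ L x v := by
  obtain ⟨hchain, -, hlast⟩ := hp
  obtain ⟨q, rfl⟩ := List.getLast?_eq_some_iff.1 hlast
  have hpair : (q ++ [v]).Pairwise L := by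
    refine List.IsChain.pairwise (hchain.imp ?_)
    rintro _ y ⟨hy, rfl⟩
    exact hL y hy
  rcases List.mem_append.1 hx with hxq | hxv
  · exact .inr ((List.pairwise_append.1 hpair).2.2 x hxq v (List.mem_singleton_self v))
  · exact .inl (List.mem_singleton.1 hxv)

namespace IsTreePreorder

theorem anc_antisymm (h : IsTreePreorder T ord) (hxy : T.Anc x y) (hyx : T.Anc y x) : x = y :=
  h.1 ((h.2.1 x y hxy).antisymm (h.2.1 y x hyx))

theorem anc_of_le_of_le (h : IsTreePreorder T ord) (hxz : T.Anc x z) (hxy : ord x ≤ ord y)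
    (hyz : ord y ≤ ord z) : T.Anc x y :=
  h.2.2 x x y z (.refl x) hxz hxy hyz

theorem isTrans_reversePrecedes (h : IsTreePreorder T ord) : IsTrans V (ReversePrecedes T ord) := by
  constructor
  rintro x y z (⟨hxy, hne⟩ | ⟨hyx, hnot⟩) (⟨hyz, -⟩ | ⟨hzy, hnot'⟩)
  · exact .inl ⟨hxy.trans hyz, fun e ↦ hne (h.anc_antisymm hxy (e ▸ hyz))⟩
  · rcases le_or_gt (ord x) (ord z) with hxz | hzx
    · refine .inl ⟨h.anc_of_le_of_le hxy hxz hzy.le, fun e ↦ hnot' (e ▸ hxy)⟩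
    · exact .inr ⟨hzx, fun hzx' ↦ hnot' (hzx'.trans hxy)⟩
  · refine .inr ⟨?_, fun hzx ↦ hnot (hyz.trans hzx)⟩
    by_contra! hxz
    exact hnot (h.anc_of_le_of_le hyz hyx.le hxz)
  · exact .inr ⟨hzy.trans hyx, fun hzx ↦ hnot' (h.anc_of_le_of_le hzx hzy.le hyx.le)⟩

theorem wellFounded_reversePrecedes [Finite V] (h : IsTreePreorder T ord) :
    WellFounded (ReversePrecedes T ord) := by
  have := h.isTrans_reversePrecedes
  have : Std.Irrefl (ReversePrecedes T ord) :=
    ⟨fun x hx ↦ hx.elim (fun h ↦ h.2 rfl) fun h ↦ h.1.false⟩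
  exact Finite.wellFounded_of_trans_of_irrefl _

end IsTreePreorder

theorem LowHigh.exists_arcs (h : LowHigh G T ord) (hroot : T.root = G.s) :
    ∃ b r : V → V, (∀ v, v ≠ G.s → G.A (b v) v ∧ ord (b v) < ord v) ∧
      ∀ v, v ≠ G.s → G.A (r v) v ∧ ReversePrecedes T ord (r v) v := by
  obtain ⟨hpre, hlh⟩ := h
  suffices ∀ v, ∃ b r, v ≠ G.s →
      (G.A b v ∧ ord b < ord v) ∧ G.A r v ∧ ReversePrecedes T ord r v by
    choose b r hbr using this
    exact ⟨b, r, fun v hv ↦ (hbr v hv).1, fun v hv ↦ (hbr v hv).2⟩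
  intro v
  by_cases hv : v = G.s
  · exact ⟨v, v, absurd hv⟩
  rcases hlh v hv with harc | ⟨u, w, huv, hwv, huv_lt, hvw_lt, hnot⟩
  · have hanc : T.Anc (T.parent v) v := ⟨1, rfl⟩
    have hne : T.parent v ≠ v := fun e ↦
      T.not_anc_parent (hroot ▸ hv) (e.symm ▸ .refl v)
    exact ⟨T.parent v, T.parent v, fun _ ↦
      ⟨⟨harc, (hpre.2.1 _ _ hanc).lt_of_ne (hpre.1.ne hne)⟩, harc, .inl ⟨hanc, hne⟩⟩⟩
  · exact ⟨u, w, fun _ ↦ ⟨⟨huv, huv_lt⟩, hwv, .inr ⟨hvw_lt, hnot⟩⟩⟩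

theorem IsTreePreorder.anc_of_mem_of_mem (h : IsTreePreorder T ord)
    (hb : ∀ v, v ≠ s → ord (b v) < ord v) (hr : ∀ v, v ≠ s → ReversePrecedes T ord (r v) v)
    (hvw : ord v ≤ ord w) (hp : IsWalk (parentArc s b) s v p)
    (hq : IsWalk (parentArc s r) s w q) (hxp : x ∈ p) (hxq : x ∈ q) :
    T.Anc x v ∧ T.Anc x w := by
  have hxv : ord x ≤ ord v := by
    have : IsTrans V fun x y ↦ ord x < ord y := ⟨fun _ _ _ ↦ lt_trans⟩
    rcases hp.eq_or_rel_of_mem (L := fun x y ↦ ord x < ord y) hb hxp with rfl | hlt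
    · rfl
    · exact hlt.le
  have hxw : T.Anc x w := by
    have := h.isTrans_reversePrecedes
    rcases hq.eq_or_rel_of_mem hr hxq with rfl | ⟨hanc, -⟩ | ⟨hlt, -⟩
    · exact .refl x
    · exact hanc
    · exact absurd (hxv.trans hvw) hlt.not_ge
  exact ⟨h.anc_of_le_of_le hxw hxv hvw, hxw⟩

theorem LowHigh.exists_stronglyIndependent [Finite V] (h : LowHigh G T ord)
    (hp : ParentProperty G T) (hroot : T.root = G.s) :
    ∃ B R : V → V → Prop,
      IsSpanningTree G B ∧ IsSpanningTree G R ∧ StronglyIndependent G B R := by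
  obtain ⟨b, r, hb, hr⟩ := h.exists_arcs hroot
  have hpre : IsTreePreorder T ord := h.1
  have hcommon {v w : V} (hvw : ord v ≤ ord w) {p q : List V}
      (hpv : IsWalk (parentArc G.s b) G.s v p) (hqw : IsWalk (parentArc G.s r) G.s w q)
      {x : V} (hxp : x ∈ p) (hxq : x ∈ q) : G.Dom x v ∧ G.Dom x w :=
    (hpre.anc_of_mem_of_mem (fun v hv ↦ (hb v hv).2) (fun v hv ↦ (hr v hv).2) hvw hpv hqw
      hxp hxq).imp (hp.dom_of_anc hroot) (hp.dom_of_anc hroot)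
  refine ⟨_, _, isSpanningTree_parentArc (measure ord).wf hb,
    isSpanningTree_parentArc hpre.wellFounded_reversePrecedes hr, fun v w ↦ ?_⟩
  rcases le_total (ord v) (ord w) with hvw | hwv
  · exact .inl fun p q hpv hqw x hxp hxq ↦ hcommon hvw hpv hqw hxp hxq
  · exact .inr fun p q hpv hqw x hxp hxq ↦ (hcommon hwv hqw hpv hxq hxp).symm

end SpanningTrees

/-- Every flow graph has a pair of strongly independent spanning trees rooted
at `s`. -/
theorem stmt17 [Fintype V] (G : FlowGraph V) :
    ∃ B R : V → V → Prop,
      IsSpanningTree G B ∧ IsSpanningTree G R ∧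
      StronglyIndependent G B R := by
  obtain ⟨T, hT⟩ := G.exists_isDomTree
  obtain ⟨ord, hord⟩ := exists_lowHigh hT.parentProperty hT.siblingProperty hT.1
  exact hord.exists_stronglyIndependent hT.parentProperty hT.1
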